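/- Let n ≥ 8 be a natural number and r a natural number with 1 ≤ r ≤ ⌊n/4⌋. Set x_1 := −1 + 2/n, x_2 := 2/n − 1/x_1, b_1 := x_1 + r·(1 − 1/x_2), φ := arctan(√(n² − 1)), P := π/φ, ω_r := arctan((1 − n·b_1)/√(n² − 1)) − φ, and k₀ := ⌊1/(P − 2) + (ω_r − arctan(1/√(n² − 1)))/(φ·(P − 2))⌋. Then the maximum length of alternating signs mlas_r(n) := 2k₀ + 2 satisfies mlas_r(n) ≥ max{ 2·⌊(π/8)·(n − 2)⌋ − 4(r − 1), 2 }. -/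

import Mathlib

/-!
Write `s = √(n² - 1)`, `θ = arctan (1 / s)`, `m = 1 - n * b₁` and `A = arctan (m / s)`. Then
`φ = π / 2 - θ` and `φ * (P - 2) = 2 * θ`, so that `k₀ = ⌊(A - θ) / (2 * θ)⌋` and `z ≤ k₀` means
`(2 * z + 1) * θ ≤ A`. For `z = 0` this is `1 ≤ m`. In general `θ ≤ 1 / s` leaves
`2 * z + 1 ≤ s * A`, and it remains to bound `s * A` below by `π / 4 * (n - 2) - 4 * r + 3`.

Since `m` is affine in `r` and `arctan` is concave on `[0, ∞)`, that bound needs to be checked only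
at `r = 1` and `r = n / 4`. At `r = n / 4` its right-hand side is negative. At `r = 1` the excess of
the left-hand side tends to `π / 2 - 3 / 2 ≈ 0.07` as `n → ∞`, and a rational lower bound that
agrees with `arctan` to second order at `1` is sharp enough from `n = 7` on.
-/

namespace AlternatingSigns

open Real Set

section Arctan

lemma arctan_le_self {x : ℝ} (hx : 0 ≤ x) : arctan x ≤ x := by
  simpa only [tan_arctan] using le_tan (arctan_nonneg.2 hx) (arctan_lt_pi_div_two x)

lemma concaveOn_arctan : ConcaveOn ℝ (Ici 0) arctan := by
  refine AntitoneOn.concaveOn_of_deriv (convex_Ici 0) continuous_arctan.continuousOn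
    differentiable_arctan.differentiableOn ?_
  rw [interior_Ici]
  intro x hx y _ hxy
  have hx0 : 0 ≤ x := (mem_Ioi.1 hx).le
  simp only [Real.deriv_arctan]
  gcongr

lemma hasDerivAt_arctan_add_rational (t : ℝ) :
    HasDerivAt (fun x ↦ arctan x + 4 * (1 - x ^ 2) / (5 + 6 * x + 5 * x ^ 2))
      ((t - 1) ^ 2 * (t ^ 2 - 18 * t + 1) / ((1 + t ^ 2) * (5 + 6 * t + 5 * t ^ 2) ^ 2)) t := by
  have hden : 5 + 6 * t + 5 * t ^ 2 ≠ 0 := by nlinarith [sq_nonneg (5 * t + 3)]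
  have hnum_deriv : HasDerivAt (fun x : ℝ ↦ 4 * (1 - x ^ 2)) (4 * -(2 * t)) t := by
    simpa using ((hasDerivAt_pow 2 t).const_sub 1).const_mul 4
  have hden_deriv : HasDerivAt (fun x : ℝ ↦ 5 + 6 * x + 5 * x ^ 2) (6 + 5 * (2 * t)) t := by
    simpa using (((hasDerivAt_id' t).const_mul 6).const_add 5).fun_add
      ((hasDerivAt_pow 2 t).const_mul 5)
  refine ((hasDerivAt_arctan t).add (hnum_deriv.div hden_deriv hden)).congr_deriv ?_
  have hsq : 1 + t ^ 2 ≠ 0 := by positivity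
  generalize hq : 5 + 6 * t + 5 * t ^ 2 = q at hden ⊢
  field_simp
  rw [← hq]
  ring

/-- The subtracted term is `4 * u / (4 + u ^ 2)` for
`u = (1 - t) / (1 + t) = tan (π / 4 - arctan t)`, and `4 * u / (4 + u ^ 2)` exceeds `arctan u`
only to third order in `u`. -/
lemma pi_div_four_sub_le_arctan {t : ℝ} (ht : 1 / 17 ≤ t) (ht1 : t ≤ 1) :
    π / 4 - 4 * (1 - t ^ 2) / (5 + 6 * t + 5 * t ^ 2) ≤ arctan t := by
  have hanti : AntitoneOn (fun x : ℝ ↦ arctan x + 4 * (1 - x ^ 2) / (5 + 6 * x + 5 * x ^ 2))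
      (Icc (1 / 17) 1) := by
    refine antitoneOn_of_deriv_nonpos (convex_Icc _ _)
      (fun x _ ↦ (hasDerivAt_arctan_add_rational x).continuousAt.continuousWithinAt)
      (fun x _ ↦ (hasDerivAt_arctan_add_rational x).differentiableAt.differentiableWithinAt) ?_
    intro x hx
    obtain ⟨hx0, hx1⟩ := interior_subset hx
    rw [(hasDerivAt_arctan_add_rational x).deriv]
    have hroots : x ^ 2 - 18 * x + 1 ≤ 0 := by nlinarith
    exact div_nonpos_of_nonpos_of_nonneg
      (mul_nonpos_of_nonneg_of_nonpos (sq_nonneg _) hroots) (by positivity)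
  have h : arctan 1 + 4 * (1 - 1 ^ 2) / (5 + 6 * 1 + 5 * 1 ^ 2) ≤
      arctan t + 4 * (1 - t ^ 2) / (5 + 6 * t + 5 * t ^ 2) :=
    hanti ⟨ht, ht1⟩ (right_mem_Icc.2 (by norm_num)) ht1
  rw [arctan_one] at h
  linarith

lemma mul_pi_div_four_sub_le_mul_arctan_div {s m : ℝ} (hs : 0 < s) (hm : s / 17 ≤ m)
    (hms : m ≤ s) :
    s * (π / 4) - 4 * s * (s ^ 2 - m ^ 2) / (5 * s ^ 2 + 6 * s * m + 5 * m ^ 2) ≤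
      s * arctan (m / s) := by
  have ht : 1 / 17 ≤ m / s := by rw [le_div_iff₀ hs]; linarith
  have h := mul_le_mul_of_nonneg_left
    (pi_div_four_sub_le_arctan ht ((div_le_one hs).2 hms)) hs.le
  have hm0 : 0 < m := (by positivity : 0 < s / 17).trans_le hm
  have hscale : 4 * s * (s ^ 2 - m ^ 2) / (5 * s ^ 2 + 6 * s * m + 5 * m ^ 2) =
      s * (4 * (1 - (m / s) ^ 2) / (5 + 6 * (m / s) + 5 * (m / s) ^ 2)) := by
    field_simp
  rw [hscale, ← mul_sub]
  exact h

end Arctan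

section Sqrt

variable {n : ℝ}

lemma sqrt_sq_sub_one_pos (hn : 1 < n) : 0 < √(n ^ 2 - 1) :=
  sqrt_pos.2 (by nlinarith)

lemma sub_le_sqrt_sq_sub_one (hn : 7 ≤ n) : n - 1 / 13 ≤ √(n ^ 2 - 1) :=
  le_sqrt_of_sq_le (by nlinarith)

lemma two_mul_mul_sqrt_le (hn : 1 ≤ n) : 2 * n * √(n ^ 2 - 1) ≤ 2 * n ^ 2 - 1 := by
  have hsq : √(n ^ 2 - 1) ^ 2 = n ^ 2 - 1 := sq_sqrt (by nlinarith)
  linarith [two_mul_le_add_sq n √(n ^ 2 - 1)]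

end Sqrt

/-- The starting value `b₁ = x₁ + r (1 - 1 / x₂)` of the recurrence. -/
noncomputable def initialValue (n r : ℝ) : ℝ :=
  -1 + 2 / n + r * (1 - 1 / (2 / n - 1 / (-1 + 2 / n)))

/-- The angle `φ` of the recurrence `b_{j+1} = 2 / n - 1 / b_j`. -/
noncomputable def angle (n : ℝ) : ℝ := arctan √(n ^ 2 - 1)

/-- The complement `θ = π / 2 - φ` of the angle `φ`, see `angle_eq`. -/
noncomputable def complAngle (n : ℝ) : ℝ := arctan (1 / √(n ^ 2 - 1))

/-- The phase `ω_r` of the recurrence. -/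
noncomputable def phase (n r : ℝ) : ℝ :=
  arctan ((1 - n * initialValue n r) / √(n ^ 2 - 1)) - angle n

/-- The index `k₀`, the largest `k` with `b_{2k+1} < 0`, with `P = π / φ` substituted. -/
noncomputable def lastNegIndex (n r : ℝ) : ℤ :=
  ⌊1 / (π / angle n - 2) + (phase n r - complAngle n) / (angle n * (π / angle n - 2))⌋

/-- The quantity `m = 1 - n b₁` in closed form, see `one_sub_mul_initialValue`. -/
noncomputable def phaseNumerator (n r : ℝ) : ℝ :=
  (n - 1) * (1 - 4 * r * n / (n ^ 2 + 2 * n - 4))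

variable {n r : ℝ}

lemma one_sub_mul_initialValue (hn : 2 < n) :
    1 - n * initialValue n r = phaseNumerator n r := by
  have hn0 : n ≠ 0 := by linarith
  have hn2 : n - 2 ≠ 0 := by linarith
  have hD : n ^ 2 + 2 * n - 4 ≠ 0 := by nlinarith
  have hx1 : -1 + 2 / n = -((n - 2) / n) := by field_simp; ring
  have hx2 : 2 / n - 1 / (-1 + 2 / n) = (n ^ 2 + 2 * n - 4) / (n * (n - 2)) := by
    rw [hx1]
    field_simp
    ring
  have hfactor : 1 - 1 / (2 / n - 1 / (-1 + 2 / n)) = 4 * (n - 1) / (n ^ 2 + 2 * n - 4) := by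
    rw [hx2, one_div_div, one_sub_div hD]
    ring
  rw [initialValue, phaseNumerator, hfactor, hx1]
  generalize n ^ 2 + 2 * n - 4 = D
  field_simp
  ring

lemma angle_eq (hn : 1 < n) : angle n = π / 2 - complAngle n := by
  rw [angle, complAngle, one_div, arctan_inv_of_pos (sqrt_sq_sub_one_pos hn), sub_sub_cancel]

lemma lastNegIndex_eq_floor (hn : 2 < n) :
    lastNegIndex n r =
      ⌊(arctan (phaseNumerator n r / √(n ^ 2 - 1)) - complAngle n) / (2 * complAngle n)⌋ := by
  have hs : 0 < √(n ^ 2 - 1) := sqrt_sq_sub_one_pos (by linarith)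
  have hangle : angle n ≠ 0 := (arctan_pos.2 hs).ne'
  have hcompl : complAngle n ≠ 0 := (arctan_pos.2 (one_div_pos.2 hs)).ne'
  have hperiod : π / angle n - 2 = 2 * complAngle n / angle n := by
    field_simp
    linarith [angle_eq (by linarith : 1 < n)]
  rw [lastNegIndex, phase, one_sub_mul_initialValue hn, hperiod]
  congr 1
  field_simp
  ring

lemma le_lastNegIndex_iff (hn : 2 < n) {z : ℤ} :
    z ≤ lastNegIndex n r ↔
      (2 * z + 1) * complAngle n ≤ arctan (phaseNumerator n r / √(n ^ 2 - 1)) := by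
  have hcompl : 0 < complAngle n :=
    arctan_pos.2 (one_div_pos.2 (sqrt_sq_sub_one_pos (by linarith)))
  rw [lastNegIndex_eq_floor hn, Int.le_floor, le_div_iff₀ (by positivity), le_sub_iff_add_le]
  ring_nf

lemma lastNegIndex_nonneg (hn : 2 < n) (hm : 1 ≤ phaseNumerator n r) :
    0 ≤ lastNegIndex n r := by
  rw [le_lastNegIndex_iff hn, Int.cast_zero, mul_zero, zero_add, one_mul]
  exact arctan_mono (by gcongr)

lemma le_lastNegIndex (hn : 2 < n) (hm : 1 ≤ phaseNumerator n r) {z : ℤ}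
    (hz : 2 * z + 1 ≤ √(n ^ 2 - 1) * arctan (phaseNumerator n r / √(n ^ 2 - 1))) :
    z ≤ lastNegIndex n r := by
  rcases le_total z 0 with hz0 | hz0
  · exact hz0.trans (lastNegIndex_nonneg hn hm)
  have hs : 0 < √(n ^ 2 - 1) := sqrt_sq_sub_one_pos (by linarith)
  have : (0 : ℝ) ≤ z := by exact_mod_cast hz0
  rw [le_lastNegIndex_iff hn]
  calc (2 * z + 1) * complAngle n
      ≤ (2 * z + 1) * (1 / √(n ^ 2 - 1)) := by
        gcongr
        exact arctan_le_self (by positivity)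
    _ = (2 * z + 1) / √(n ^ 2 - 1) := mul_one_div _ _
    _ ≤ arctan (phaseNumerator n r / √(n ^ 2 - 1)) := (div_le_iff₀' hs).2 hz

lemma one_le_phaseNumerator (hn : 7 ≤ n) (hr : 4 * r ≤ n) : 1 ≤ phaseNumerator n r := by
  have hD : 0 < n ^ 2 + 2 * n - 4 := by nlinarith
  have hn1 : 0 ≤ n - 1 := by linarith
  calc 1 ≤ (n - 1) * (1 - n * n / (n ^ 2 + 2 * n - 4)) := by
        rw [one_sub_div hD.ne', mul_div_assoc', le_div_iff₀ hD]
        nlinarith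
    _ ≤ phaseNumerator n r := by
        rw [phaseNumerator]
        gcongr

lemma phaseNumerator_one (hn : 2 ≤ n) :
    phaseNumerator n 1 = (n - 1) * (n ^ 2 - 2 * n - 4) / (n ^ 2 + 2 * n - 4) := by
  have hD : n ^ 2 + 2 * n - 4 ≠ 0 := by nlinarith
  rw [phaseNumerator, one_sub_div hD]
  ring

lemma div_three_le_phaseNumerator_one (hn : 7 ≤ n) : n / 3 ≤ phaseNumerator n 1 := by
  rw [phaseNumerator_one (by linarith), le_div_iff₀ (by nlinarith)]
  nlinarith [mul_nonneg (sub_nonneg.2 hn) (sq_nonneg n)]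

lemma phaseNumerator_one_le (hn : 7 ≤ n) : phaseNumerator n 1 ≤ n - 7 / 2 := by
  rw [phaseNumerator_one (by linarith), div_le_iff₀ (by nlinarith)]
  nlinarith

lemma phaseNumerator_convexCombo {a b : ℝ} (hab : a + b = 1) (r₁ r₂ : ℝ) :
    phaseNumerator n (a * r₁ + b * r₂) = a * phaseNumerator n r₁ + b * phaseNumerator n r₂ := by
  simp only [phaseNumerator]
  linear_combination (1 - n) * hab

lemma phaseNumerator_one_poly_le (hn : 7 ≤ n) :
    (2 * n ^ 2 - 1) *
        (4 * (n ^ 2 - 1 - phaseNumerator n 1 ^ 2) - 2.509 * 6 * phaseNumerator n 1) ≤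
      2 * n * (2.509 * 5 * (n ^ 2 - 1 + phaseNumerator n 1 ^ 2)) := by
  rw [phaseNumerator_one (by linarith)]
  have hcleared : 0 ≤
      2 * n * (2.509 * 5 * ((n ^ 2 - 1) * (n ^ 2 + 2 * n - 4) ^ 2 +
        ((n - 1) * (n ^ 2 - 2 * n - 4)) ^ 2)) -
      (2 * n ^ 2 - 1) * (4 * ((n ^ 2 - 1) * (n ^ 2 + 2 * n - 4) ^ 2 -
        ((n - 1) * (n ^ 2 - 2 * n - 4)) ^ 2) -
        2.509 * 6 * ((n - 1) * (n ^ 2 - 2 * n - 4)) * (n ^ 2 + 2 * n - 4)) := by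
    -- As a polynomial in `n - 7` it has nonnegative coefficients.
    obtain ⟨x, hx, rfl⟩ : ∃ x, 0 ≤ x ∧ n = 7 + x := ⟨n - 7, by linarith, by ring⟩
    ring_nf
    positivity
  have hD : 0 < n ^ 2 + 2 * n - 4 := by nlinarith
  generalize n ^ 2 + 2 * n - 4 = D at hcleared hD ⊢
  generalize (n - 1) * (n ^ 2 - 2 * n - 4) = M at hcleared ⊢
  refine sub_nonneg.1 ((div_nonneg hcleared (sq_nonneg D)).trans_eq ?_)
  field_simp

/-- The constant only has to stay below `1 + π / 4 * (2 - 1 / 13) ≈ 2.5104`, where `n - 1 / 13` is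
the lower bound for `√(n ^ 2 - 1)`. -/
lemma arctan_remainder_one_le (hn : 7 ≤ n) :
    4 * √(n ^ 2 - 1) * (√(n ^ 2 - 1) ^ 2 - phaseNumerator n 1 ^ 2) /
      (5 * √(n ^ 2 - 1) ^ 2 + 6 * √(n ^ 2 - 1) * phaseNumerator n 1 +
        5 * phaseNumerator n 1 ^ 2) ≤ 2.509 := by
  have hm := div_three_le_phaseNumerator_one hn
  have hm' := phaseNumerator_one_le hn
  have hpoly := phaseNumerator_one_poly_le hn
  have hs := two_mul_mul_sqrt_le (by linarith : 1 ≤ n)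
  have hs0 : 0 < √(n ^ 2 - 1) := sqrt_sq_sub_one_pos (by linarith)
  have hs2 : √(n ^ 2 - 1) ^ 2 = n ^ 2 - 1 := sq_sqrt (by nlinarith)
  generalize phaseNumerator n 1 = m at *
  generalize √(n ^ 2 - 1) = s at *
  have hm0 : 0 < m := by linarith
  have hcoeff : 0 ≤ 4 * (n ^ 2 - 1 - m ^ 2) - 2.509 * 6 * m := by nlinarith
  have hlinear : 2 * n * (s * (4 * (n ^ 2 - 1 - m ^ 2) - 2.509 * 6 * m)) ≤
      2 * n * (2.509 * 5 * (n ^ 2 - 1 + m ^ 2)) := by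
    rw [← mul_assoc]
    exact (mul_le_mul_of_nonneg_right hs hcoeff).trans hpoly
  rw [div_le_iff₀ (by positivity), hs2]
  linarith [le_of_mul_le_mul_left hlinear (by linarith)]

lemma le_sqrt_mul_arctan_one (hn : 7 ≤ n) :
    π / 4 * (n - 2) - 1 ≤ √(n ^ 2 - 1) * arctan (phaseNumerator n 1 / √(n ^ 2 - 1)) := by
  have hs := sub_le_sqrt_sq_sub_one hn
  have hs' : √(n ^ 2 - 1) ≤ n := (sqrt_le_sqrt (by linarith)).trans_eq (sqrt_sq (by linarith))
  have hm := div_three_le_phaseNumerator_one hn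
  have hm' := phaseNumerator_one_le hn
  calc π / 4 * (n - 2) - 1
      ≤ (n - 1 / 13) * (π / 4) - 2.509 := by linarith [pi_gt_d2]
    _ ≤ √(n ^ 2 - 1) * (π / 4) - _ := by gcongr; exact arctan_remainder_one_le hn
    _ ≤ √(n ^ 2 - 1) * arctan (phaseNumerator n 1 / √(n ^ 2 - 1)) :=
        mul_pi_div_four_sub_le_mul_arctan_div (by linarith) (by linarith) (by linarith)

lemma le_sqrt_mul_arctan (hn : 7 ≤ n) (hr1 : 1 ≤ r) (hr2 : 4 * r ≤ n) :
    π / 4 * (n - 2) - 4 * r + 3 ≤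
      √(n ^ 2 - 1) * arctan (phaseNumerator n r / √(n ^ 2 - 1)) := by
  obtain ⟨a, b, ha, hb, hab, hr⟩ := Icc_subset_segment ⟨hr1, (by linarith : r ≤ n / 4)⟩
  obtain rfl : a * 1 + b * (n / 4) = r := hr
  set s := √(n ^ 2 - 1)
  have hm1 : 0 ≤ phaseNumerator n 1 / s :=
    div_nonneg (zero_le_one.trans (one_le_phaseNumerator hn (by linarith))) (sqrt_nonneg _)
  have hm2 : 0 ≤ phaseNumerator n (n / 4) / s :=
    div_nonneg (zero_le_one.trans (one_le_phaseNumerator hn (by linarith))) (sqrt_nonneg _)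
  have hright : π / 4 * (n - 2) - n + 3 ≤ s * arctan (phaseNumerator n (n / 4) / s) :=
    calc π / 4 * (n - 2) - n + 3 ≤ 0 := by nlinarith [pi_lt_d2]
      _ ≤ _ := mul_nonneg (sqrt_nonneg _) (arctan_nonneg.2 hm2)
  calc π / 4 * (n - 2) - 4 * (a * 1 + b * (n / 4)) + 3
      = a * (π / 4 * (n - 2) - 1) + b * (π / 4 * (n - 2) - n + 3) := by
        linear_combination -(π / 4 * (n - 2) + 3) * hab
    _ ≤ a * (s * arctan (phaseNumerator n 1 / s)) +
          b * (s * arctan (phaseNumerator n (n / 4) / s)) := by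
        gcongr
        exact le_sqrt_mul_arctan_one hn
    _ = s * (a * arctan (phaseNumerator n 1 / s) +
          b * arctan (phaseNumerator n (n / 4) / s)) := by ring
    _ ≤ s * arctan (a * (phaseNumerator n 1 / s) + b * (phaseNumerator n (n / 4) / s)) :=
        mul_le_mul_of_nonneg_left (concaveOn_arctan.2 hm1 hm2 ha hb hab) (sqrt_nonneg _)
    _ = s * arctan (phaseNumerator n (a * 1 + b * (n / 4)) / s) := by
        rw [phaseNumerator_convexCombo hab, add_div, mul_div_assoc, mul_div_assoc]

end AlternatingSigns

open AlternatingSigns in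
theorem mlas_lower_bound_general (n r : ℝ) (hn : 7 ≤ n) (hr1 : 1 ≤ r) (hr2 : 4 * r ≤ n) :
    2 * lastNegIndex n r + 2 ≥ max (2 * ⌊Real.pi / 8 * (n - 2) - 2 * (r - 1)⌋) 2 := by
  have hn2 : 2 < n := by linarith
  have hm := one_le_phaseNumerator hn hr2
  have hnonneg := lastNegIndex_nonneg hn2 hm
  have hle : ⌊Real.pi / 8 * (n - 2) - 2 * (r - 1)⌋ - 1 ≤ lastNegIndex n r := by
    refine le_lastNegIndex hn2 hm (le_trans ?_ (le_sqrt_mul_arctan hn hr1 hr2))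
    push_cast
    linarith [Int.floor_le (Real.pi / 8 * (n - 2) - 2 * (r - 1))]
  exact max_le (by linarith) (by linarith)

/-- Theorem 5.6: in the setting of Theorem 5.2, the maximum length of alternating
signs mlas_r(n) = 2k₀ + 2 satisfies
mlas_r(n) ≥ max{2⌊(π/8)(n − 2)⌋ − 4(r − 1), 2}. -/
theorem mlas_lower_bound (n r : ℕ) (hn : 8 ≤ n) (hr1 : 1 ≤ r) (hr2 : r ≤ n / 4)
    (x1 x2 b1 : ℝ) (hx1 : x1 = -1 + 2 / (n : ℝ)) (hx2 : x2 = 2 / (n : ℝ) - 1 / x1)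
    (hb1 : b1 = x1 + (r : ℝ) * (1 - 1 / x2))
    (φ P ω : ℝ) (hφ : φ = Real.arctan (Real.sqrt ((n : ℝ) ^ 2 - 1)))
    (hP : P = Real.pi / φ)
    (hω : ω = Real.arctan ((1 - (n : ℝ) * b1) / Real.sqrt ((n : ℝ) ^ 2 - 1)) - φ)
    (k₀ : ℤ)
    (hk₀ : k₀ = ⌊1 / (P - 2) +
      (ω - Real.arctan (1 / Real.sqrt ((n : ℝ) ^ 2 - 1))) / (φ * (P - 2))⌋) :
    2 * k₀ + 2 ≥
      max (2 * ⌊(Real.pi / 8) * ((n : ℝ) - 2)⌋ - 4 * ((r : ℤ) - 1)) 2 := by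
  subst hx1 hx2 hb1 hφ hP hω
  have hfloor : ⌊Real.pi / 8 * ((n : ℝ) - 2) - 2 * ((r : ℝ) - 1)⌋ =
      ⌊Real.pi / 8 * ((n : ℝ) - 2)⌋ - 2 * ((r : ℤ) - 1) := by
    exact_mod_cast Int.floor_sub_intCast (Real.pi / 8 * ((n : ℝ) - 2)) (2 * ((r : ℤ) - 1))
  have hgeneral := mlas_lower_bound_general n r (by norm_cast; omega)
    (by exact_mod_cast hr1) (by norm_cast; omega)
  rw [hfloor, mul_sub, ← mul_assoc] at hgeneral
  exact hk₀ ▸ hgeneral
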